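/- arXiv:1311.0137 — 2 statements merged into one kernel-verified Lean document; each statement's English description precedes it below -/
import Mathlib

section
/- Every graph is a topological minor of some 1-nearly planar graph. -/
/-!
Definitions for wall-by-wall distance, λ-flat graphs and ξ-nearly planar graphs,
following Grigoriev, Koutsonas and Thilikos, "Nearly Planar Graphs and λ-flat Graphs".

A plane graph is modelled combinatorially as a simple graph equipped with a rotation
system (a cyclic order of the edges incident to each vertex) that is planar, i.e.
satisfies Euler's formula (with faces counted as orbits of the face-tracing successor
on darts, corrected for isolated vertices and the number of connected components).

A graph embedding in the sphere (where edges may cross, but only at points that are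
not vertices) is modelled topologically by a `Drawing`: an injective placement of the
vertices on the unit sphere of `ℝ³` together with, for each edge, a simple arc joining
the images of its endpoints whose interior avoids all vertices.
-/

namespace WBW

/-- The set of edges of `G` incident to the vertex `v`. -/
def incidentSet {V : Type*} (G : SimpleGraph V) (v : V) : Set (Sym2 V) :=
  {e | e ∈ G.edgeSet ∧ v ∈ e}

/-- A simple graph together with a rotation system: for every vertex `v`, a
permutation of `Sym2 V` which fixes every non-incident edge and is a single cycle on
the set of edges incident to `v` (the cyclic order `σ_v` of the drawing). -/
structure RotationSystem (V : Type*) where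
  G : SimpleGraph V
  rot : V → Equiv.Perm (Sym2 V)
  rot_cycleOn : ∀ v, (rot v).IsCycleOn (incidentSet G v)
  rot_fixed : ∀ v, ∀ e ∉ incidentSet G v, rot v e = e

variable {V : Type*}

/-- The face-tracing successor on darts: the dart `(u,v)` is followed by the dart
leaving `v` along the edge succeeding `s(u,v)` in the cyclic order around `v`. -/
noncomputable def RotationSystem.faceNext (R : RotationSystem V) (d : R.G.Dart) :
    R.G.Dart :=
  have hmem : d.edge ∈ incidentSet R.G d.toProd.2 :=
    ⟨d.edge_mem, by rcases d with ⟨⟨a, b⟩, h⟩; simp [SimpleGraph.Dart.edge]⟩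
  have hmem' : R.rot d.toProd.2 d.edge ∈ incidentSet R.G d.toProd.2 :=
    (R.rot_cycleOn d.toProd.2).1.mapsTo hmem
  ⟨(d.toProd.2, Sym2.Mem.other hmem'.2), by
    have h := Sym2.other_spec hmem'.2
    have h2 : R.rot d.toProd.2 d.edge ∈ R.G.edgeSet := hmem'.1
    rw [← h] at h2
    exact h2⟩

/-- The number of faces of a rotation system: the number of orbits of the
face-tracing successor on darts. -/
noncomputable def RotationSystem.numFaces (R : RotationSystem V) : ℕ :=
  Nat.card (Quot (fun a b : R.G.Dart => R.faceNext a = b))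

/-- A rotation system is plane (it is an embedding of the graph in the sphere without
crossings) iff it satisfies Euler's formula, componentwise; isolated vertices are
accounted for separately, since they carry no dart. -/
def RotationSystem.IsPlane (R : RotationSystem V) : Prop :=
  Nat.card V + R.numFaces + Nat.card {v : V | ∀ w, ¬ R.G.Adj v w} =
    Nat.card R.G.edgeSet + 2 * Nat.card R.G.ConnectedComponent

/-- Two edges are attached if they share a vertex `v` and appear consecutively in the
cyclic order `σ_v` or its inverse. -/
def Attached (R : RotationSystem V) (e e' : Sym2 V) : Prop :=
  ∃ v : V, e ∈ incidentSet R.G v ∧ e' ∈ incidentSet R.G v ∧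
    (R.rot v e = e' ∨ R.rot v e' = e)

/-- A wall-by-wall walk: a nonempty sequence of distinct edges of `R.G` in which
every two consecutive edges are attached. -/
def IsWbwWalk (R : RotationSystem V) (L : List (Sym2 V)) : Prop :=
  L ≠ [] ∧ L.Nodup ∧ (∀ e ∈ L, e ∈ R.G.edgeSet) ∧ L.Chain' (Attached R)

/-- An `(x,y)`-wall-by-wall walk: a wall-by-wall walk whose first edge is incident to
`x` and whose last edge is incident to `y`. -/
def IsWbwWalkFromTo (R : RotationSystem V) (x y : V) (L : List (Sym2 V)) : Prop :=
  IsWbwWalk R L ∧ (∃ e, L.head? = some e ∧ x ∈ e) ∧ (∃ e, L.getLast? = some e ∧ y ∈ e)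

/-- The wall-by-wall distance between `x` and `y`: the least number of edges of an
`(x,y)`-wall-by-wall walk (`⊤` if there is no such walk). -/
noncomputable def wbwDist (R : RotationSystem V) (x y : V) : ℕ∞ :=
  sInf {n : ℕ∞ | ∃ L, IsWbwWalkFromTo R x y L ∧ (L.length : ℕ∞) = n}

/-- The `λ`-power of a plane graph: keep all edges and make adjacent all pairs of
vertices at wall-by-wall distance at most `λ`. -/
def RotationSystem.power (R : RotationSystem V) (l : ℕ) : SimpleGraph V :=
  R.G ⊔ SimpleGraph.fromRel (fun x y => wbwDist R x y ≤ (l : ℕ∞))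

/-- `H` is a subgraph of `G` via the injection `τ`. -/
def SubgraphVia {U V : Type*} (H : SimpleGraph U) (G : SimpleGraph V) (τ : U → V) :
    Prop :=
  Function.Injective τ ∧ ∀ x y, H.Adj x y → G.Adj (τ x) (τ y)

/-- A graph is `λ`-flat if it is a subgraph of the `λ`-power of some plane graph. -/
def IsFlat (l : ℕ) {V : Type*} (G : SimpleGraph V) : Prop :=
  ∃ (W : Type) (_ : Finite W) (R : RotationSystem W) (τ : V → W),
    R.IsPlane ∧ SubgraphVia G (R.power l) τ

/-- The unit sphere in `ℝ³`. -/
def unitSphere : Set (EuclideanSpace ℝ (Fin 3)) := Metric.sphere 0 1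

/-- A drawing (embedding) of a graph in the sphere: vertices are placed injectively,
every edge is drawn as a simple arc joining the images of its two endpoints, and the
interior of every arc avoids all vertex images (so edges may meet, away from their
endpoints, only at points that are not vertices). -/
structure Drawing {V : Type*} (G : SimpleGraph V) where
  vmap : V → unitSphere
  vmap_inj : Function.Injective vmap
  arc : Sym2 V → C(Set.Icc (0 : ℝ) 1, unitSphere)
  arc_inj : ∀ e ∈ G.edgeSet, Function.Injective (arc e)
  arc_ends : ∀ e ∈ G.edgeSet,
    Sym2.map vmap e =
      s(arc e ⟨0, Set.mem_Icc.mpr (by norm_num)⟩, arc e ⟨1, Set.mem_Icc.mpr (by norm_num)⟩)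
  interior_avoids : ∀ e ∈ G.edgeSet, ∀ t : Set.Icc (0 : ℝ) 1,
    (t : ℝ) ≠ 0 → (t : ℝ) ≠ 1 → arc e t ∉ Set.range vmap

/-- The crossings of the edge `e` in a drawing: pairs consisting of another edge `e'`
and a point, not a vertex, lying on the arcs of both `e` and `e'`. -/
def crossingSet {V : Type*} {G : SimpleGraph V} (D : Drawing G) (e : Sym2 V) :
    Set (Sym2 V × unitSphere) :=
  {q | q.1 ∈ G.edgeSet ∧ q.1 ≠ e ∧ q.2 ∈ Set.range (D.arc e) ∧
    q.2 ∈ Set.range (D.arc q.1) ∧ q.2 ∉ Set.range D.vmap}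

/-- A graph is `ξ`-nearly planar if it has a drawing in the sphere in which every
edge is crossed at most `ξ` times. -/
def IsNearlyPlanar (x : ℕ) {V : Type*} (G : SimpleGraph V) : Prop :=
  ∃ D : Drawing G, ∀ e ∈ G.edgeSet,
    (crossingSet D e).Finite ∧ (crossingSet D e).ncard ≤ x

/-- `λ(G)`: the least `λ` for which `G` is `λ`-flat. -/
noncomputable def flatNum {V : Type*} (G : SimpleGraph V) : ℕ :=
  sInf {l | IsFlat l G}

/-- `ξ(G)`: the least `ξ` for which `G` is `ξ`-nearly planar. -/
noncomputable def nearNum {V : Type*} (G : SimpleGraph V) : ℕ :=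
  sInf {x | IsNearlyPlanar x G}

/-- A graph is 3-connected if it has more than 3 vertices and removing any at most 2
vertices leaves it connected. -/
def ThreeConnected {V : Type*} (G : SimpleGraph V) : Prop :=
  3 < Nat.card V ∧ ∀ s : Set V, s.ncard ≤ 2 → (G.induce sᶜ).Connected

/-- A plane graph is triangulated if every face is bounded by a triangle, i.e. every
orbit of the face-tracing successor has length exactly 3. -/
def RotationSystem.Triangulated (R : RotationSystem V) : Prop :=
  ∀ d : R.G.Dart, R.faceNext (R.faceNext (R.faceNext d)) = d ∧ R.faceNext d ≠ d

/-- `H` is a topological minor of `G`: some subdivision of `H` is a subgraph of `G`,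
equivalently the branch vertices embed injectively into `G` and the edges of `H` are
realized by internally disjoint paths of `G` avoiding the branch vertices. -/
def IsTopMinor {U V : Type*} (H : SimpleGraph U) (G : SimpleGraph V) : Prop :=
  ∃ τ : U → V, Function.Injective τ ∧
    ∃ P : ∀ ⦃x y : U⦄, H.Adj x y → G.Walk (τ x) (τ y),
      (∀ ⦃x y : U⦄ (h : H.Adj x y), (P h).IsPath) ∧
      (∀ ⦃x y : U⦄ (h : H.Adj x y), ∀ v ∈ (P h).support,
        v ∈ Set.range τ → v = τ x ∨ v = τ y) ∧
      (∀ ⦃x y x' y' : U⦄ (h : H.Adj x y) (h' : H.Adj x' y'), s(x, y) ≠ s(x', y') →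
        ∀ v, v ∈ (P h).support → v ∈ (P h').support → v ∈ Set.range τ)

/-- `H` is a contraction of `G`: `H` is obtained from `G` by contracting edges,
equivalently there is a surjection `V(G) → V(H)` with connected fibres such that the
edges of `H` are exactly the pairs of distinct fibres joined by an edge of `G`. -/
def IsContractionOf {U V : Type*} (H : SimpleGraph U) (G : SimpleGraph V) : Prop :=
  ∃ f : V → U, Function.Surjective f ∧
    (∀ u : U, (G.induce (f ⁻¹' {u})).Connected) ∧
    (∀ a b : U, H.Adj a b ↔ a ≠ b ∧ ∃ x y, G.Adj x y ∧ f x = a ∧ f y = b)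

/-- The medial graph of a plane graph `G`: its vertices are the edges of `G`, two of
them being adjacent iff they are attached (this is the dual of the radial graph). -/
def medial (R : RotationSystem V) : SimpleGraph {e : Sym2 V // e ∈ R.G.edgeSet} :=
  SimpleGraph.fromRel (fun e f => Attached R e.1 f.1)

/-- The `(n × n)`-grid graph. -/
def gridGraph (n : ℕ) : SimpleGraph (Fin n × Fin n) :=
  SimpleGraph.fromRel (fun a b =>
    (a.1 = b.1 ∧ (a.2 : ℕ) + 1 = (b.2 : ℕ)) ∨ (a.2 = b.2 ∧ (a.1 : ℕ) + 1 = (b.1 : ℕ)))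

/-- The faces of a rotation system: orbits of the face-tracing successor on darts. -/
def RotationSystem.Face (R : RotationSystem V) : Type _ :=
  Quot (fun a b : R.G.Dart => R.faceNext a = b)

/-- The edge `e` lies on the boundary of the face `F`. -/
def EdgeOnFace (R : RotationSystem V) (e : Sym2 V) (F : R.Face) : Prop :=
  ∃ d : R.G.Dart, Quot.mk _ d = F ∧ d.edge = e

/-- A wall-by-wall walk passes through the face `F` if two consecutive edges of the
walk both lie on the boundary of `F`. -/
def WalkThroughFace (R : RotationSystem V) (L : List (Sym2 V)) (F : R.Face) : Prop :=
  ∃ (l₁ : List (Sym2 V)) (e₁ e₂ : Sym2 V) (l₂ : List (Sym2 V)),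
    L = l₁ ++ e₁ :: e₂ :: l₂ ∧ EdgeOnFace R e₁ F ∧ EdgeOnFace R e₂ F

end WBW

namespace OneNP

/-! ### A continuous injection of the plane into the sphere -/

/-- The point `(x, y, 1)`. -/
noncomputable def lift3 (z : ℝ × ℝ) : EuclideanSpace ℝ (Fin 3) := !₂[z.1, z.2, 1]

lemma lift3_ne (z : ℝ × ℝ) : lift3 z ≠ 0 := by
  intro h
  have := congrArg (fun v : EuclideanSpace ℝ (Fin 3) => v 2) h
  simp [lift3] at this

lemma lift3_cont : Continuous lift3 := by
  unfold lift3
  refine (PiLp.continuous_toLp 2 _).comp ?_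
  refine continuous_pi fun i => ?_
  fin_cases i
  · exact continuous_fst
  · exact continuous_snd
  · exact continuous_const

/-- Central projection of the plane to the upper hemisphere. -/
noncomputable def toSphere (z : ℝ × ℝ) : WBW.unitSphere :=
  ⟨‖lift3 z‖⁻¹ • lift3 z, by
    have h : ‖lift3 z‖ ≠ 0 := norm_ne_zero_iff.mpr (lift3_ne z)
    simp [WBW.unitSphere, norm_smul, h]⟩

lemma toSphere_cont : Continuous toSphere := by
  refine Continuous.subtype_mk ?_ _
  exact (lift3_cont.norm.inv₀ fun z => norm_ne_zero_iff.mpr (lift3_ne z)).smul lift3_cont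

lemma toSphere_inj : Function.Injective toSphere := by
  intro z w h
  have h0 : ‖lift3 z‖⁻¹ • lift3 z = ‖lift3 w‖⁻¹ • lift3 w := congrArg Subtype.val h
  have hw : ‖lift3 w‖ ≠ 0 := norm_ne_zero_iff.mpr (lift3_ne w)
  have h2 := congrArg (fun v : EuclideanSpace ℝ (Fin 3) => v 2) h0
  have e0 := congrArg (fun v : EuclideanSpace ℝ (Fin 3) => v 0) h0
  have e1 := congrArg (fun v : EuclideanSpace ℝ (Fin 3) => v 1) h0
  simp only [PiLp.smul_apply, smul_eq_mul] at h2 e0 e1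
  have h2' : ‖lift3 z‖⁻¹ = ‖lift3 w‖⁻¹ := by simpa [lift3] using h2
  rw [h2'] at e0 e1
  have f0 := mul_left_cancel₀ (inv_ne_zero hw) e0
  have f1 := mul_left_cancel₀ (inv_ne_zero hw) e1
  exact Prod.ext (by simpa [lift3] using f0) (by simpa [lift3] using f1)

/-! ### Straight line drawings -/

/-- The straight arc from `a` to `b`, on the sphere. -/
noncomputable def sarc (a b : ℝ × ℝ) : C(Set.Icc (0 : ℝ) 1, WBW.unitSphere) :=
  ⟨fun t => toSphere (AffineMap.lineMap a b (t : ℝ)), by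
    refine toSphere_cont.comp ?_
    exact AffineMap.lineMap_continuous.comp continuous_subtype_val⟩

lemma straight {U : Type} (G : SimpleGraph U) (pos : U → ℝ × ℝ)
    (hinj : Function.Injective pos)
    (hav : ∀ a b, G.Adj a b → ∀ w, pos w ∉ openSegment ℝ (pos a) (pos b))
    (hcr : ∀ a b c d c' d' z z', G.Adj a b → G.Adj c d → G.Adj c' d' →
      s(c, d) ≠ s(a, b) → s(c', d') ≠ s(a, b) →
      z ∈ openSegment ℝ (pos a) (pos b) → z ∈ openSegment ℝ (pos c) (pos d) →
      z' ∈ openSegment ℝ (pos a) (pos b) → z' ∈ openSegment ℝ (pos c') (pos d') →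
      z = z' ∧ s(c, d) = s(c', d')) :
    WBW.IsNearlyPlanar 1 G := by
  have hout : ∀ e : Sym2 U, s(e.out.1, e.out.2) = e := fun e => by
    conv_rhs => rw [← Quot.out_eq e]
  have hadj : ∀ e ∈ G.edgeSet, G.Adj e.out.1 e.out.2 := fun e he => by
    rw [← hout e] at he
    exact he
  let D : WBW.Drawing G :=
    { vmap := fun u => toSphere (pos u)
      vmap_inj := toSphere_inj.comp hinj
      arc := fun e => sarc (pos e.out.1) (pos e.out.2)
      arc_inj := by
        intro e he t t' h
        have h1 := toSphere_inj h
        have hne : pos e.out.1 ≠ pos e.out.2 := fun h => (hadj e he).ne (hinj h)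
        exact Subtype.ext (AffineMap.lineMap_injective ℝ hne h1)
      arc_ends := by
        intro e he
        conv_lhs => rw [← hout e]
        simp [sarc]
      interior_avoids := by
        rintro e he ⟨t, ht⟩ h0 h1 ⟨w, hw⟩
        have h2 := toSphere_inj hw
        refine hav _ _ (hadj e he) w ?_
        rw [openSegment_eq_image_lineMap]
        exact ⟨t, ⟨lt_of_le_of_ne ht.1 (Ne.symm h0), lt_of_le_of_ne ht.2 h1⟩, h2.symm⟩ }
  have hseg : ∀ e : Sym2 U, ∀ p, p ∈ Set.range (D.arc e) → p ∉ Set.range D.vmap →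
      ∃ z, p = toSphere z ∧ z ∈ openSegment ℝ (pos e.out.1) (pos e.out.2) := by
    rintro e p ⟨⟨t, ht⟩, rfl⟩ hp
    refine ⟨_, rfl, ?_⟩
    rw [openSegment_eq_image_lineMap]
    refine ⟨t, ⟨lt_of_le_of_ne ht.1 ?_, lt_of_le_of_ne ht.2 ?_⟩, rfl⟩
    · rintro rfl
      exact hp ⟨e.out.1, by simp [D, sarc]⟩
    · rintro rfl
      exact hp ⟨e.out.2, by simp [D, sarc]⟩
  refine ⟨D, fun e he => ?_⟩
  have hsub : (WBW.crossingSet D e).Subsingleton := by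
    rintro ⟨f, p⟩ ⟨hf, hfe, hpe, hpf, hpv⟩ ⟨f', p'⟩ ⟨hf', hfe', hpe', hpf', hpv'⟩
    dsimp only at *
    obtain ⟨z, hz, hze⟩ := hseg e p hpe hpv
    obtain ⟨z1, hz1, hzf⟩ := hseg f p hpf hpv
    obtain ⟨z', hz', hze'⟩ := hseg e p' hpe' hpv'
    obtain ⟨z1', hz1', hzf'⟩ := hseg f' p' hpf' hpv'
    obtain rfl := toSphere_inj (hz.symm.trans hz1)
    obtain rfl := toSphere_inj (hz'.symm.trans hz1')
    have := hcr _ _ _ _ _ _ z z' (hadj e he) (hadj f hf) (hadj f' hf')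
      (by rw [hout, hout]; exact hfe) (by rw [hout, hout]; exact hfe') hze hzf hze' hzf'
    rw [hout, hout] at this
    rw [hz, hz', this.1, this.2]
  exact ⟨hsub.finite, (by
    have := hsub.finite.to_subtype
    exact Set.ncard_le_one_iff_subsingleton.mpr hsub)⟩

/-! ### The universal graph -/

/-- Vertices of the (infinite) universal graph: branch vertices `A i`, vertices `V p k` on
the `p`-th vertical strand, and vertices `H c h` on the `h`-th horizontal strand. -/
inductive Node where
  | A (i : ℕ)
  | V (p k : ℕ)
  | H (c h : ℕ)

/-- Positions of the nodes in the plane. -/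
noncomputable def npos (n : ℕ) : Node → ℝ × ℝ
  | .A i => (2 * (i * n : ℕ), -2)
  | .V p k => (2 * p, 2 * k - 1)
  | .H c h => (2 * c - 1, 2 * h)

/-- The oriented edges of the universal graph. -/
inductive Step (n : ℕ) : Node → Node → Prop
  | fan (i p : ℕ) : i * n ≤ p → p < i * n + n → Step n (.A i) (.V p 0)
  | v (p k : ℕ) : Step n (.V p k) (.V p (k + 1))
  | h (c k : ℕ) : Step n (.H c k) (.H (c + 1) k)
  | cr (p k : ℕ) : Step n (.V p k) (.H (p + 1) k)
  | cl (p k : ℕ) : Step n (.V p k) (.H p k)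

/-- The universal graph. -/
def UG (n : ℕ) : SimpleGraph Node := SimpleGraph.fromRel (Step n)

lemma Step.ne {n : ℕ} {a b : Node} (h : Step n a b) : a ≠ b := by
  cases h <;> simp

lemma Step.adj {n : ℕ} {a b : Node} (h : Step n a b) : (UG n).Adj a b :=
  ⟨h.ne, Or.inl h⟩

lemma tri (a b : ℕ) : a = b ∨ (a : ℝ) + 1 ≤ b ∨ (b : ℝ) + 1 ≤ a := by
  rcases lt_trichotomy a b with h | h | h
  · exact Or.inr (Or.inl (by exact_mod_cast h))
  · exact Or.inl h
  · exact Or.inr (Or.inr (by exact_mod_cast h))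

lemma npos_inj {n : ℕ} (hn : 0 < n) : Function.Injective (npos n) := by
  intro a b h
  have hx := congrArg Prod.fst h
  have hy := congrArg Prod.snd h
  clear h
  cases a with
  | A i =>
    cases b with
    | A j =>
      simp only [npos] at hx
      have : i * n = j * n := by
        have : ((i * n : ℕ) : ℝ) = (j * n : ℕ) := by linarith
        exact_mod_cast this
      rw [Nat.eq_of_mul_eq_mul_right hn this]
    | V p k =>
      simp only [npos] at hy
      have : (0 : ℝ) ≤ k := k.cast_nonneg
      linarith
    | H c k =>
      simp only [npos] at hy
      have : (0 : ℝ) ≤ k := k.cast_nonneg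
      linarith
  | V p k =>
    cases b with
    | A j =>
      simp only [npos] at hy
      have : (0 : ℝ) ≤ k := k.cast_nonneg
      linarith
    | V p' k' =>
      simp only [npos] at hx hy
      rcases tri p p' with rfl | h | h <;> rcases tri k k' with rfl | h' | h' <;>
        first | rfl | (exfalso; linarith)
    | H c k' =>
      simp only [npos] at hx hy
      rcases tri p c with rfl | h | h <;> exfalso <;> linarith
  | H c k =>
    cases b with
    | A j =>
      simp only [npos] at hy
      have : (0 : ℝ) ≤ k := k.cast_nonneg
      linarith
    | V p k' =>
      simp only [npos] at hx hy
      rcases tri p c with rfl | h | h <;> exfalso <;> linarith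
    | H c' k' =>
      simp only [npos] at hx hy
      rcases tri c c' with rfl | h | h <;> rcases tri k k' with rfl | h' | h' <;>
        first | rfl | (exfalso; linarith)

lemma mem_seg {a b z : ℝ × ℝ} (h : z ∈ openSegment ℝ a b) :
    ∃ t : ℝ, 0 < t ∧ t < 1 ∧ z.1 = a.1 + t * (b.1 - a.1) ∧ z.2 = a.2 + t * (b.2 - a.2) := by
  rw [openSegment_eq_image_lineMap] at h
  obtain ⟨t, ⟨h0, h1⟩, rfl⟩ := h
  refine ⟨t, h0, h1, ?_, ?_⟩ <;> simp [AffineMap.lineMap_apply] <;> ring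

/-- Coordinate description of the points on the open edges. -/
inductive OnStep (n : ℕ) : Node → Node → ℝ → ℝ → Prop
  | fan (i p : ℕ) (t x y : ℝ) : i * n ≤ p → p < i * n + n → 0 < t → t < 1 →
      x = 2 * (i * n : ℕ) + t * (2 * p - 2 * (i * n : ℕ)) → y = -2 + t →
      OnStep n (.A i) (.V p 0) x y
  | v (p k : ℕ) (t x y : ℝ) : 0 < t → t < 1 → x = 2 * p → y = 2 * k - 1 + 2 * t →
      OnStep n (.V p k) (.V p (k + 1)) x y
  | h (c k : ℕ) (t x y : ℝ) : 0 < t → t < 1 → x = 2 * c - 1 + 2 * t → y = 2 * k →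
      OnStep n (.H c k) (.H (c + 1) k) x y
  | cr (p k : ℕ) (t x y : ℝ) : 0 < t → t < 1 → x = 2 * p + t → y = 2 * k - 1 + t →
      OnStep n (.V p k) (.H (p + 1) k) x y
  | cl (p k : ℕ) (t x y : ℝ) : 0 < t → t < 1 → x = 2 * p - t → y = 2 * k - 1 + t →
      OnStep n (.V p k) (.H p k) x y

lemma onStep {n : ℕ} {a b : Node} (h : Step n a b) {z : ℝ × ℝ}
    (hz : z ∈ openSegment ℝ (npos n a) (npos n b)) : OnStep n a b z.1 z.2 := by
  obtain ⟨t, h0, h1, hx, hy⟩ := mem_seg hz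
  cases h with
  | fan i p hp hp' =>
    refine .fan i p t _ _ hp hp' h0 h1 ?_ ?_
    · rw [hx]; simp [npos]
    · rw [hy]; simp [npos]; ring
  | v p k =>
    refine .v p k t _ _ h0 h1 ?_ ?_
    · rw [hx]; simp [npos]
    · rw [hy]; simp [npos]; ring
  | h c k =>
    refine .h c k t _ _ h0 h1 ?_ ?_
    · rw [hx]; simp [npos]; ring
    · rw [hy]; simp [npos]
  | cr p k =>
    refine .cr p k t _ _ h0 h1 ?_ ?_
    · rw [hx]; simp [npos]; ring
    · rw [hy]; simp [npos]
  | cl p k =>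
    refine .cl p k t _ _ h0 h1 ?_ ?_
    · rw [hx]; simp [npos]; ring
    · rw [hy]; simp [npos]

lemma OnStep.avoid {n : ℕ} {a b : Node} {x y : ℝ} (h : OnStep n a b x y) (w : Node)
    (hx : (npos n w).1 = x) (hy : (npos n w).2 = y) : False := by
  cases w with
  | A i =>
    simp only [npos] at hx hy
    cases h with
    | fan => linarith
    | v p k => have : (0 : ℝ) ≤ k := k.cast_nonneg
               linarith
    | h p k => have : (0 : ℝ) ≤ k := k.cast_nonneg
               linarith
    | cr p k => have : (0 : ℝ) ≤ k := k.cast_nonneg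
                linarith
    | cl p k => have : (0 : ℝ) ≤ k := k.cast_nonneg
                linarith
  | V q l =>
    simp only [npos] at hx hy
    have : (0 : ℝ) ≤ l := l.cast_nonneg
    cases h with
    | fan => linarith
    | v p k => rcases tri k l with rfl | h | h <;> linarith
    | h p k => rcases tri k l with rfl | h | h <;> linarith
    | cr p k => rcases tri p q with rfl | h | h <;> linarith
    | cl p k => rcases tri p q with rfl | h | h <;> linarith
  | H q l =>
    simp only [npos] at hx hy
    have : (0 : ℝ) ≤ l := l.cast_nonneg
    cases h with
    | fan => linarith
    | v p k => rcases tri p q with rfl | h | h <;> linarith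
    | h p k => rcases tri p q with rfl | h | h <;> linarith
    | cr p k => rcases tri k l with rfl | h | h <;> linarith
    | cl p k => rcases tri k l with rfl | h | h <;> linarith

/-- The only possible crossing point on an edge. -/
noncomputable def crossPt : Node → ℝ × ℝ
  | .A _ => 0
  | .V p k => (2 * p, 2 * k)
  | .H c k => (2 * c, 2 * k)

/-- The only possible edge crossing a given edge. -/
def crossEdge : Node → Sym2 Node
  | .A i => s(.A i, .A i)
  | .V p k => s(.H p k, .H (p + 1) k)
  | .H c k => s(.V c k, .V c (k + 1))

lemma fan_aux {m m' n p p' : ℕ} {t : ℝ} (h : m + n ≤ m') (hp : p < m + n) (hp' : m' ≤ p')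
    (hm : m ≤ p) (h0 : 0 < t) (h1 : t < 1)
    (hx : (2 * m : ℝ) + t * (2 * p - 2 * m) = 2 * m' + t * (2 * p' - 2 * m')) : False := by
  have a1 : (p : ℝ) < m' := by exact_mod_cast lt_of_lt_of_le hp h
  have a2 : (m' : ℝ) ≤ p' := by exact_mod_cast hp'
  have a3 : (m : ℝ) ≤ p := by exact_mod_cast hm
  nlinarith [mul_nonneg h0.le (sub_nonneg.2 a2), mul_nonneg (sub_nonneg.2 h1.le) (sub_nonneg.2 a3)]

lemma OnStep.cross {n : ℕ} {a b c d : Node} {x y : ℝ} (h : OnStep n a b x y)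
    (h' : OnStep n c d x y) :
    (a = c ∧ b = d) ∨ ((x, y) = crossPt a ∧ s(c, d) = crossEdge a) := by
  cases h with
  | fan i p t _ _ hp1 hp2 h0 h1 hx hy =>
    cases h' with
    | fan i' p' t' _ _ hp1' hp2' h0' h1' hx' hy' =>
      obtain rfl : t = t' := by linarith
      left
      have hxx := hx.symm.trans hx'
      rcases lt_trichotomy i i' with hi | rfl | hi
      · exact (fan_aux (by nlinarith) hp2 hp1' hp1 h0 h1 hxx).elim
      · have : t * (p : ℝ) = t * p' := by linarith
        have := mul_left_cancel₀ h0.ne' this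
        have : p = p' := by exact_mod_cast this
        simp [this]
      · exact (fan_aux (by nlinarith) hp2' hp1 hp1' h0 h1 hxx.symm).elim
    | v p' k => exfalso; have : (0 : ℝ) ≤ k := k.cast_nonneg
                linarith
    | h p' k => exfalso; have : (0 : ℝ) ≤ k := k.cast_nonneg
                linarith
    | cr p' k => exfalso; have : (0 : ℝ) ≤ k := k.cast_nonneg
                 linarith
    | cl p' k => exfalso; have : (0 : ℝ) ≤ k := k.cast_nonneg
                 linarith
  | v p k t _ _ h0 h1 hx hy =>
    have hk : (0 : ℝ) ≤ k := k.cast_nonneg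
    cases h' with
    | fan => exfalso; linarith
    | v q l =>
      rcases tri p q with rfl | h | h <;> rcases tri k l with rfl | h | h <;>
        first | (exfalso; linarith) | exact Or.inl ⟨rfl, rfl⟩
    | h q l =>
      rcases tri p q with rfl | h | h <;> rcases tri k l with rfl | h | h <;>
        first
        | (exfalso; linarith)
        | exact Or.inr ⟨Prod.ext (by simp only [crossPt]; linarith)
            (by simp only [crossPt]; linarith), rfl⟩
    | cr q l => rcases tri p q with rfl | h | h <;> exfalso <;> linarith
    | cl q l => rcases tri p q with rfl | h | h <;> exfalso <;> linarith
  | h p k t _ _ h0 h1 hx hy =>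
    have hk : (0 : ℝ) ≤ k := k.cast_nonneg
    cases h' with
    | fan => exfalso; linarith
    | v q l =>
      rcases tri p q with rfl | h | h <;> rcases tri k l with rfl | h | h <;>
        first
        | (exfalso; linarith)
        | exact Or.inr ⟨Prod.ext (by simp only [crossPt]; linarith)
            (by simp only [crossPt]; linarith), rfl⟩
    | h q l =>
      rcases tri p q with rfl | h | h <;> rcases tri k l with rfl | h | h <;>
        first | (exfalso; linarith) | exact Or.inl ⟨rfl, rfl⟩
    | cr q l => rcases tri k l with rfl | h | h <;> exfalso <;> linarith
    | cl q l => rcases tri k l with rfl | h | h <;> exfalso <;> linarith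
  | cr p k t _ _ h0 h1 hx hy =>
    have hk : (0 : ℝ) ≤ k := k.cast_nonneg
    cases h' with
    | fan => exfalso; linarith
    | v q l => rcases tri p q with rfl | h | h <;> exfalso <;> linarith
    | h q l => rcases tri k l with rfl | h | h <;> exfalso <;> linarith
    | cr q l =>
      rcases tri p q with rfl | h | h <;> rcases tri k l with rfl | h | h <;>
        first | (exfalso; linarith) | exact Or.inl ⟨rfl, rfl⟩
    | cl q l => rcases tri p q with rfl | h | h <;> exfalso <;> linarith
  | cl p k t _ _ h0 h1 hx hy =>
    have hk : (0 : ℝ) ≤ k := k.cast_nonneg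
    cases h' with
    | fan => exfalso; linarith
    | v q l => rcases tri p q with rfl | h | h <;> exfalso <;> linarith
    | h q l => rcases tri k l with rfl | h | h <;> exfalso <;> linarith
    | cr q l => rcases tri p q with rfl | h | h <;> exfalso <;> linarith
    | cl q l =>
      rcases tri p q with rfl | h | h <;> rcases tri k l with rfl | h | h <;>
        first | (exfalso; linarith) | exact Or.inl ⟨rfl, rfl⟩

lemma adj_step {n : ℕ} {a b : Node} (h : (UG n).Adj a b) :
    ∃ a' b', Step n a' b' ∧ s(a, b) = s(a', b') ∧
      openSegment ℝ (npos n a) (npos n b) = openSegment ℝ (npos n a') (npos n b') := by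
  rcases h with ⟨-, h | h⟩
  · exact ⟨a, b, h, rfl, rfl⟩
  · exact ⟨b, a, h, Sym2.eq_swap, openSegment_symm _ _ _⟩

/-- Every induced subgraph of the universal graph is 1-nearly planar. -/
lemma nearly_induce {n : ℕ} (hn : 0 < n) (S : Set Node) :
    WBW.IsNearlyPlanar 1 ((UG n).induce S) := by
  refine straight _ (fun u => npos n u.1) ((npos_inj hn).comp Subtype.val_injective) ?_ ?_
  · intro a b hab w hw
    obtain ⟨a', b', hs, -, hseg⟩ := adj_step (a := a.1) (b := b.1) hab
    rw [hseg] at hw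
    exact (onStep hs hw).avoid w.1 rfl rfl
  · intro a b c d c' d' z z' hab hcd hcd' hne hne' h1 h2 h3 h4
    obtain ⟨a1, b1, s1, e1, g1⟩ := adj_step (a := a.1) (b := b.1) hab
    obtain ⟨c1, d1, s2, e2, g2⟩ := adj_step (a := c.1) (b := d.1) hcd
    obtain ⟨c1', d1', s3, e3, g3⟩ := adj_step (a := c'.1) (b := d'.1) hcd'
    rw [g1] at h1 h3
    rw [g2] at h2
    rw [g3] at h4
    have key : ∀ x y : S, s(x, y) ≠ s(a, b) → s(x.1, y.1) ≠ s(a.1, b.1) := by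
      intro x y hxy h
      apply hxy
      apply Sym2.map.injective Subtype.val_injective
      simpa using h
    have k1 := key _ _ hne
    have k2 := key _ _ hne'
    rw [e1, e2] at k1
    rw [e1, e3] at k2
    rcases (onStep s1 h1).cross (onStep s2 h2) with ⟨r1, r2⟩ | ⟨r1, r2⟩
    · exact (k1 (by rw [r1, r2])).elim
    rcases (onStep s1 h3).cross (onStep s3 h4) with ⟨q1, q2⟩ | ⟨q1, q2⟩
    · exact (k2 (by rw [q1, q2])).elim
    refine ⟨r1.trans q1.symm, ?_⟩
    apply Sym2.map.injective Subtype.val_injective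
    have : s(c.1, d.1) = s(c'.1, d'.1) := by rw [e2, e3, r2, q2]
    simpa using this

/-! ### Routing -/

/-- `u` and `v` are joined by a walk inside `T`. -/
def Conn {W : Type} (G : SimpleGraph W) (T : Set W) (u v : W) : Prop :=
  ∃ p : G.Walk u v, ∀ w ∈ p.support, w ∈ T

lemma Conn.trans {W : Type} {G : SimpleGraph W} {T : Set W} {u v w : W} (h : Conn G T u v)
    (h' : Conn G T v w) : Conn G T u w := by
  obtain ⟨p, hp⟩ := h
  obtain ⟨q, hq⟩ := h'
  refine ⟨p.append q, fun x hx => ?_⟩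
  rcases (SimpleGraph.Walk.mem_support_append_iff _ _).1 hx with h | h
  · exact hp x h
  · exact hq x h

lemma Conn.symm {W : Type} {G : SimpleGraph W} {T : Set W} {u v : W} (h : Conn G T u v) :
    Conn G T v u := by
  obtain ⟨p, hp⟩ := h
  exact ⟨p.reverse, fun x hx => hp x (by simpa using hx)⟩

lemma Conn.refl {W : Type} {G : SimpleGraph W} {T : Set W} {u : W} (h : u ∈ T) :
    Conn G T u u := ⟨.nil, by simpa using h⟩

lemma Conn.adj {W : Type} {G : SimpleGraph W} {T : Set W} {u v : W} (h : G.Adj u v)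
    (hu : u ∈ T) (hv : v ∈ T) : Conn G T u v :=
  ⟨h.toWalk, by simp [hu, hv]⟩

/-- The track of the edge `ij`, where `i < j`. -/
def track (n i j : ℕ) : Node → Prop
  | .A m => m = i ∨ m = j
  | .V p _ => p = i * n + j ∨ p = j * n + i
  | .H _ h => h = i * n + j

lemma conn_track {n i j : ℕ} (hij : i < j) (hj : j < n) :
    Conn (UG n) {w | track n i j w} (.A i) (.A j) := by
  set T : Set Node := {w | track n i j w} with hT
  have vert : ∀ p, (p = i * n + j ∨ p = j * n + i) → ∀ k, Conn (UG n) T (.V p 0) (.V p k) := by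
    intro p hp k
    induction k with
    | zero => exact Conn.refl hp
    | succ k ih => exact ih.trans (Conn.adj (Step.v p k).adj hp hp)
  have hor : ∀ c m, Conn (UG n) T (.H c (i * n + j)) (.H (c + m) (i * n + j)) := by
    intro c m
    induction m with
    | zero => exact Conn.refl rfl
    | succ m ih => exact ih.trans (Conn.adj (Step.h (c + m) _).adj rfl rfl)
  have hlt : i * n + j + 1 ≤ j * n + i := by nlinarith
  obtain ⟨m, hm⟩ := Nat.exists_eq_add_of_le hlt
  have h1 : Conn (UG n) T (.A i) (.V (i * n + j) 0) :=
    Conn.adj (Step.fan i _ (by omega) (by omega)).adj (Or.inl rfl) (Or.inl rfl)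
  have h2 := vert (i * n + j) (Or.inl rfl) (i * n + j)
  have h3 : Conn (UG n) T (.V (i * n + j) (i * n + j)) (.H (i * n + j + 1) (i * n + j)) :=
    Conn.adj (Step.cr _ _).adj (Or.inl rfl) rfl
  have h4 := hor (i * n + j + 1) m
  rw [← hm] at h4
  have h5 : Conn (UG n) T (.V (j * n + i) (i * n + j)) (.H (j * n + i) (i * n + j)) :=
    Conn.adj (Step.cl _ _).adj (Or.inr rfl) rfl
  have h6 := vert (j * n + i) (Or.inr rfl) (i * n + j)
  have h7 : Conn (UG n) T (.A j) (.V (j * n + i) 0) :=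
    Conn.adj (Step.fan j _ (by omega) (by omega)).adj (Or.inr rfl) (Or.inr rfl)
  exact h1.trans (h2.trans (h3.trans (h4.trans (h5.symm.trans (h6.symm.trans h7.symm)))))

lemma code_inj {n a b c d : ℕ} (hb : b < n) (hd : d < n) (h : a * n + b = c * n + d) :
    a = c ∧ b = d := by
  have hac : a = c := by
    rcases lt_trichotomy a c with h' | h' | h'
    · nlinarith
    · exact h'
    · nlinarith
  subst hac
  exact ⟨rfl, by omega⟩

lemma track_disj {n i j i' j' : ℕ} (hij : i < j) (hj : j < n) (hij' : i' < j') (hj' : j' < n)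
    {w : Node} (h : track n i j w) (h' : track n i' j' w) :
    (∃ m, w = .A m ∧ (m = i ∨ m = j)) ∨ (i = i' ∧ j = j') := by
  cases w with
  | A m => exact Or.inl ⟨m, rfl, h⟩
  | V p k =>
    right
    rcases h with h | h <;> rcases h' with h' | h' <;>
      have := code_inj (by omega) (by omega) (h.symm.trans h') <;> omega
  | H c k =>
    right
    have h : k = i * n + j := h
    have h' : k = i' * n + j' := h'
    exact code_inj hj hj' (h.symm.trans h')

end OneNP

/-- every graph is a topological minor of some 1-nearly planar graph. -/
theorem topMinor_of_oneNearlyPlanar (V : Type) [Finite V] (G : SimpleGraph V) :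
    ∃ (W : Type) (_ : Finite W) (G' : SimpleGraph W),
      WBW.IsNearlyPlanar 1 G' ∧ WBW.IsTopMinor G G' := by
  classical
  obtain ⟨n, ⟨f⟩⟩ := Finite.exists_equiv_fin V
  let τ : V → OneNP.Node := fun x => .A (f x)
  have hτ : Function.Injective τ := by
    intro x y h
    have h' : (f x : ℕ) = f y := OneNP.Node.A.inj h
    exact f.injective (Fin.ext h')
  let T : V → V → Set OneNP.Node := fun x y =>
    {w | OneNP.track (n + 1) (min (f x) (f y) : Fin n) (max (f x) (f y) : Fin n) w}
  have hconn : ∀ x y, G.Adj x y → ∃ p : (OneNP.UG (n + 1)).Walk (τ x) (τ y),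
      p.IsPath ∧ ∀ w ∈ p.support, w ∈ T x y := by
    intro x y h
    have hc : OneNP.Conn (OneNP.UG (n + 1)) (T x y) (τ x) (τ y) := by
      have hne : f x ≠ f y := fun h' => h.ne (f.injective h')
      rcases lt_or_gt_of_ne hne with hlt | hlt
      · have := OneNP.conn_track (n := n + 1) (i := f x) (j := f y) hlt (by omega)
        simpa only [T, min_eq_left hlt.le, max_eq_right hlt.le] using this
      · have := OneNP.conn_track (n := n + 1) (i := f y) (j := f x) hlt (by omega)
        simpa only [T, min_eq_right hlt.le, max_eq_left hlt.le] using this.symm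
    obtain ⟨p, hp⟩ := hc
    exact ⟨p.bypass, p.bypass_isPath, fun w hw => hp w (p.support_bypass_subset_support hw)⟩
  choose P hP hPT using hconn
  let S : Set OneNP.Node := Set.range τ ∪ ⋃ x, ⋃ y, ⋃ h : G.Adj x y, {w | w ∈ (P x y h).support}
  have hS : S.Finite := by
    refine (Set.finite_range τ).union ?_
    refine Set.finite_iUnion fun x => Set.finite_iUnion fun y => Set.finite_iUnion fun h => ?_
    exact List.finite_toSet _
  have hPS : ∀ x y (h : G.Adj x y), ∀ w ∈ (P x y h).support, w ∈ S := by
    intro x y h w hw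
    refine Or.inr ?_
    simp only [Set.mem_iUnion]
    exact ⟨x, y, h, hw⟩
  refine ⟨S, hS.to_subtype, (OneNP.UG (n + 1)).induce S, OneNP.nearly_induce n.succ_pos S,
    fun x => ⟨τ x, Or.inl ⟨x, rfl⟩⟩, fun x y h => hτ (congrArg Subtype.val h),
    fun x y h => (P x y h).induce S (hPS x y h), ?_, ?_, ?_⟩
  · intro x y h
    have := hP x y h
    rw [← SimpleGraph.Walk.map_induce (P x y h) (hPS x y h)] at this
    exact SimpleGraph.Walk.IsPath.of_map this
  · rintro x y h v hv ⟨z, rfl⟩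
    have hv' : τ z ∈ (P x y h).support := by
      simpa [SimpleGraph.Walk.support_induce] using hv
    have ht := hPT x y h _ hv'
    have ht : (f z : ℕ) = (min (f x) (f y) : Fin n) ∨ (f z : ℕ) = (max (f x) (f y) : Fin n) := ht
    have : z = x ∨ z = y := by
      rcases ht with ht | ht <;> have ht := Fin.ext ht
      · rcases min_choice (f x) (f y) with hm | hm <;> rw [hm] at ht
        · exact Or.inl (f.injective ht)
        · exact Or.inr (f.injective ht)
      · rcases max_choice (f x) (f y) with hm | hm <;> rw [hm] at ht
        · exact Or.inl (f.injective ht)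
        · exact Or.inr (f.injective ht)
    rcases this with rfl | rfl
    · exact Or.inl rfl
    · exact Or.inr rfl
  · rintro x y x' y' h h' hne ⟨v, hvS⟩ hv hv'
    have hv1 : v ∈ (P x y h).support := by
      simpa [SimpleGraph.Walk.support_induce] using hv
    have hv2 : v ∈ (P x' y' h').support := by
      simpa [SimpleGraph.Walk.support_induce] using hv'
    have hlt : ∀ a b, G.Adj a b → ((min (f a) (f b) : Fin n) : ℕ) < (max (f a) (f b) : Fin n) := by
      intro a b hab
      have : f a ≠ f b := fun h' => hab.ne (f.injective h')
      exact Fin.lt_def.1 (min_lt_max.2 this)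
    rcases OneNP.track_disj (hlt x y h) (by omega) (hlt x' y' h') (by omega)
      (hPT x y h v hv1) (hPT x' y' h' v hv2) with ⟨m, rfl, hm⟩ | ⟨h1, h2⟩
    · have : ∃ a : Fin n, m = a := by
        rcases hm with hm | hm
        · exact ⟨_, hm⟩
        · exact ⟨_, hm⟩
      obtain ⟨a, rfl⟩ := this
      exact ⟨f.symm a, Subtype.ext (by simp [τ])⟩
    · exfalso
      apply hne
      have h1 := Fin.ext h1
      have h2 := Fin.ext h2
      have : s(f x, f y) = s(f x', f y') := by
        rw [Sym2.eq_iff]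
        rcases le_total (f x) (f y) with hl | hl <;> rcases le_total (f x') (f y') with hl' | hl' <;>
          simp only [hl, hl', min_eq_left, min_eq_right, max_eq_left, max_eq_right] at h1 h2 <;>
          simp [h1, h2]
      apply Sym2.map.injective f.injective
      simpa using this
end

section
/- For every positive integer n there exists a 2-flat graph G_n that contains the complete graph K_n as a topological minor. (Concretely, G_n is obtained from an embedding of K_n in which at most two edges cross at any point and each edge is crossed at most once after subdivision, by adding, for each crossing pair of edges {x,y} and {u,v}, the 4-cycle x u y v; the plane graph H_n obtained by further deleting all crossing pairs of edges satisfies G_n ⊆ H_n², since wbw_{H_n}(x,y) = 2 and wbw_{H_n}(u,v) = 2 for every deleted crossing pair.) -/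
namespace QFlat

/-- A quadrangulation of the sphere presented by darts: `src` is the source vertex, `nx`
the next dart around the source and `rv` the reversed dart. -/
structure QMap (V D : Type) where
  src : D → V
  nx : D → D
  rv : D → D
  rv_rv : ∀ d, rv (rv d) = d
  src_nx : ∀ d, src (nx d) = src d
  quad : ∀ d, nx (rv (nx (rv (nx (rv (nx (rv d))))))) = d
  inj : ∀ d d', src d = src d' → src (rv d) = src (rv d') → d = d'
  noloop : ∀ d, src d ≠ src (rv d)
  orbit : ∀ P : D → Prop, (∀ d, P (nx d) ↔ P d) → ∀ d d', src d = src d' → P d → P d'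
  nofix : ∀ d, nx d ≠ d
  surj : ∀ v, ∃ d, src d = v

namespace QMap
variable {V D : Type} (Q : QMap V D)

/-- The face-tracing map. -/
def fc (d : D) : D := Q.nx (Q.rv d)

lemma fc4 (d : D) : Q.fc (Q.fc (Q.fc (Q.fc d))) = d := Q.quad d

lemma fc_bij : Function.Bijective Q.fc := by
  refine ⟨fun a b h => ?_, fun b => ⟨_, Q.fc4 b⟩⟩
  rw [← Q.fc4 a, ← Q.fc4 b, h]

lemma nx_bij : Function.Bijective Q.nx := by
  have h : Q.nx = Q.fc ∘ Q.rv := by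
    funext d; simp [fc, Q.rv_rv]
  rw [h]
  exact Q.fc_bij.comp (Function.Involutive.bijective Q.rv_rv)

/-- The rotation as a permutation of the darts. -/
noncomputable def sg : Equiv.Perm D := Equiv.ofBijective Q.nx Q.nx_bij

lemma sg_apply (d : D) : Q.sg d = Q.nx d := rfl

/-- The rotation restricted to the darts leaving `v`. -/
noncomputable def sgv (v : V) : Equiv.Perm {d : D // Q.src d = v} :=
  Q.sg.subtypePerm (fun d => by rw [sg_apply, Q.src_nx])

lemma sgv_apply (v : V) (d) : (Q.sgv v d).1 = Q.nx d.1 := rfl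

/-- The edge of a dart. -/
def edge (d : D) : Sym2 V := s(Q.src d, Q.src (Q.rv d))

lemma edge_rv (d : D) : Q.edge (Q.rv d) = Q.edge d := by
  simp [edge, Q.rv_rv, Sym2.eq_swap]

lemma edge_inj {d d' : D} (h : Q.edge d = Q.edge d') : d = d' ∨ d = Q.rv d' := by
  rw [edge, edge, Sym2.eq_iff] at h
  rcases h with ⟨h1, h2⟩ | ⟨h1, h2⟩
  · exact Or.inl (Q.inj _ _ h1 h2)
  · exact Or.inr (Q.inj _ _ h1 (by rw [Q.rv_rv]; exact h2))

/-- Darts leaving `v` are determined by their edges. -/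
def emb (v : V) : {d : D // Q.src d = v} ↪ Sym2 V where
  toFun d := Q.edge d.1
  inj' := by
    rintro ⟨d, rfl⟩ ⟨d', hsrc⟩ h
    rcases Q.edge_inj h with h | h
    · exact Subtype.ext h
    · exfalso
      simp only at h
      subst h
      exact Q.noloop _ hsrc

/-- The underlying graph. -/
def G : SimpleGraph V where
  Adj u v := ∃ d, Q.src d = u ∧ Q.src (Q.rv d) = v
  symm := ⟨by
    rintro u v ⟨d, h1, h2⟩
    exact ⟨Q.rv d, h2, by rw [Q.rv_rv, h1]⟩⟩
  loopless := ⟨by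
    rintro u ⟨d, h1, h2⟩
    exact Q.noloop d (h1.trans h2.symm)⟩

lemma adj (d : D) : Q.G.Adj (Q.src d) (Q.src (Q.rv d)) := ⟨d, rfl, rfl⟩

lemma mem_edgeSet (e : Sym2 V) : e ∈ Q.G.edgeSet ↔ ∃ d, Q.edge d = e := by
  constructor
  · induction e with
    | _ u v =>
      rintro ⟨d, rfl, rfl⟩
      exact ⟨d, rfl⟩
  · rintro ⟨d, rfl⟩
    exact Q.adj d

lemma incident (v : V) : WBW.incidentSet Q.G v = Set.range (Q.emb v) := by
  ext e
  constructor
  · rintro ⟨h, hv⟩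
    obtain ⟨d, rfl⟩ := (Q.mem_edgeSet e).1 h
    rcases Sym2.mem_iff.1 hv with rfl | rfl
    · exact ⟨⟨d, rfl⟩, rfl⟩
    · exact ⟨⟨Q.rv d, rfl⟩, Q.edge_rv d⟩
  · rintro ⟨⟨d, rfl⟩, rfl⟩
    exact ⟨(Q.mem_edgeSet _).2 ⟨d, rfl⟩, Sym2.mem_mk_left _ _⟩

open Classical in
/-- The rotation at `v` as a permutation of edges. -/
noncomputable def rt (v : V) : Equiv.Perm (Sym2 V) := (Q.sgv v).viaEmbedding (Q.emb v)

lemma rt_apply (v : V) (d) : Q.rt v (Q.emb v d) = Q.emb v (Q.sgv v d) :=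
  Equiv.Perm.viaEmbedding_apply _ _ _

lemma rt_edge (d : D) : Q.rt (Q.src d) (Q.edge d) = Q.edge (Q.nx d) :=
  Q.rt_apply (Q.src d) ⟨d, rfl⟩

/-- The rotation system. -/
noncomputable def R : WBW.RotationSystem V where
  G := Q.G
  rot := Q.rt
  rot_cycleOn v := by
    rw [incident]
    refine ⟨⟨?_, (Q.rt v).injective.injOn, ?_⟩, ?_⟩
    · rintro _ ⟨d, rfl⟩
      exact ⟨_, (Q.rt_apply v d).symm⟩
    · rintro _ ⟨d, rfl⟩
      refine ⟨Q.emb v ((Q.sgv v).symm d), ⟨_, rfl⟩, ?_⟩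
      rw [rt_apply, Equiv.apply_symm_apply]
    · rintro _ ⟨⟨d, rfl⟩, rfl⟩ _ ⟨⟨d', h⟩, rfl⟩
      refine Q.orbit (fun x => Q.src x = Q.src d →
        (Q.rt (Q.src d)).SameCycle (Q.edge d) (Q.edge x)) ?_ d d' h.symm
          (fun _ => Equiv.Perm.SameCycle.refl _ _) h
      intro x
      simp only [Q.src_nx]
      refine imp_congr_right fun hx => ?_
      rw [← hx, ← Q.rt_edge, Equiv.Perm.sameCycle_apply_right]
  rot_fixed v e he := by
    rw [incident] at he
    exact Equiv.Perm.viaEmbedding_apply_of_notMem _ _ _ he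

/-- Darts of the graph. -/
def toDart (d : D) : Q.R.G.Dart := ⟨(Q.src d, Q.src (Q.rv d)), Q.adj d⟩

lemma toDart_bij : Function.Bijective Q.toDart := by
  constructor
  · intro a b h
    have h := congrArg SimpleGraph.Dart.toProd h
    simp only [toDart, Prod.mk.injEq] at h
    exact Q.inj _ _ h.1 h.2
  · rintro ⟨⟨u, v⟩, ⟨d, h1, h2⟩⟩
    simp only at h1 h2
    subst h1 h2
    exact ⟨d, rfl⟩

lemma faceNext_toDart (d : D) : Q.R.faceNext (Q.toDart d) = Q.toDart (Q.fc d) := by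
  have key : Q.R.rot (Q.toDart d).toProd.2 (Q.toDart d).edge
      = s(Q.src (Q.rv d), Q.src (Q.rv (Q.fc d))) := by
    have := Q.rt_edge (Q.rv d)
    rw [Q.edge_rv] at this
    change Q.rt (Q.src (Q.rv d)) (Q.edge d) = _
    rw [this, edge, Q.src_nx]; rfl
  apply SimpleGraph.Dart.ext
  unfold WBW.RotationSystem.faceNext
  apply Prod.ext
  · change Q.src (Q.rv d) = Q.src (Q.nx (Q.rv d))
    rw [Q.src_nx]
  · change Sym2.Mem.other _ = Q.src (Q.rv (Q.fc d))
    generalize_proofs pf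
    have h2 := (Sym2.other_spec pf).trans key
    exact Sym2.congr_right.1 h2

lemma fc2_ne (d : D) : Q.fc (Q.fc d) ≠ d := by
  intro h
  have h1 : Q.fc d = Q.rv d := by
    apply Q.inj
    · simp [fc, Q.src_nx]
    · rw [Q.rv_rv]
      have := congrArg Q.src h
      rw [← this]
      simp [fc, Q.src_nx]
  exact Q.nofix _ h1

lemma fc1_ne (d : D) : Q.fc d ≠ d := by
  intro h
  exact Q.fc2_ne d (by rw [h, h])

lemma card_faces [Finite D] : 4 * Q.R.numFaces = Nat.card D := by
  classical
  have := Fintype.ofFinite D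
  let r : D → D → Prop := fun a b => Q.fc a = b
  have e : Quot r ≃ Quot (fun a b : Q.R.G.Dart => Q.R.faceNext a = b) := by
    refine Quot.congr (Equiv.ofBijective _ Q.toDart_bij) ?_
    intro a b
    simp only [Equiv.ofBijective_apply, faceNext_toDart, r]
    exact (Q.toDart_bij.1.eq_iff).symm
  have hN : Q.R.numFaces = Nat.card (Quot r) := (Nat.card_congr e).symm
  rw [hN]
  have := Fintype.ofFinite (Quot r)
  rw [Nat.card_eq_fintype_card, Nat.card_eq_fintype_card]
  have hcov : ∀ a b : D, Quot.mk r a = Quot.mk r b →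
      b = a ∨ b = Q.fc a ∨ b = Q.fc (Q.fc a) ∨ b = Q.fc (Q.fc (Q.fc a)) := by
    intro a b h
    have h' := Quot.eqvGen_exact h
    clear h
    induction h' with
    | rel x y h => right; left; exact h.symm
    | refl x => left; rfl
    | symm x y _ ih =>
      have := Q.fc4 x
      rcases ih with h | h | h | h <;> subst h <;> simp [Q.fc4]
    | trans x y z _ _ ih1 ih2 =>
      have := Q.fc4 x
      rcases ih1 with h | h | h | h <;> subst h <;>
      rcases ih2 with h | h | h | h <;> subst h <;> simp [Q.fc4]
  have hfib : ∀ q : Quot r, (Finset.univ.filter (fun d => Quot.mk r d = q)).card = 4 := by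
    intro q
    induction q using Quot.ind with
    | _ a =>
    have hs : ∀ d, Quot.mk r (Q.fc d) = Quot.mk r d := fun d =>
      (Quot.sound (r := r) (a := d) (b := Q.fc d) rfl).symm
    have : Finset.univ.filter (fun d => Quot.mk r d = Quot.mk r a)
        = {a, Q.fc a, Q.fc (Q.fc a), Q.fc (Q.fc (Q.fc a))} := by
      ext b
      simp only [Finset.mem_filter, Finset.mem_univ, true_and, Finset.mem_insert,
        Finset.mem_singleton]
      constructor
      · intro h; exact hcov a b h.symm
      · rintro (h | h | h | h) <;> subst h <;> simp [hs]
    rw [this]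
    have i := Q.fc_bij.1
    have n1 := Q.fc1_ne
    have n2 := Q.fc2_ne
    have n3 : Q.fc (Q.fc (Q.fc a)) ≠ a := fun h => by
      have := congrArg Q.fc h
      rw [Q.fc4] at this
      exact n1 _ this.symm
    rw [Finset.card_insert_of_notMem, Finset.card_insert_of_notMem, Finset.card_pair]
    · exact (n1 _).symm
    · simp only [Finset.mem_insert, Finset.mem_singleton, not_or]
      exact ⟨(n1 _).symm, (n2 _).symm⟩
    · simp only [Finset.mem_insert, Finset.mem_singleton, not_or]
      exact ⟨(n1 _).symm, (n2 _).symm, n3.symm⟩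
  have := Finset.card_eq_sum_card_fiberwise (s := (Finset.univ : Finset D))
    (t := (Finset.univ : Finset (Quot r))) (f := Quot.mk r) (by intro x _; simp)
  rw [← Finset.card_univ (α := D), this, Finset.sum_congr rfl (fun q _ => hfib q)]
  simp [mul_comm]

lemma card_edges [Finite D] : 2 * Nat.card Q.R.G.edgeSet = Nat.card D := by
  classical
  have := Fintype.ofFinite D
  let f : D → Q.R.G.edgeSet := fun d => ⟨Q.edge d, (Q.mem_edgeSet _).2 ⟨d, rfl⟩⟩
  have hf : Function.Surjective f := by
    rintro ⟨e, he⟩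
    obtain ⟨d, rfl⟩ := (Q.mem_edgeSet e).1 he
    exact ⟨d, rfl⟩
  have := Finite.of_surjective f hf
  have := Fintype.ofFinite Q.R.G.edgeSet
  rw [Nat.card_eq_fintype_card, Nat.card_eq_fintype_card]
  have hfib : ∀ q, (Finset.univ.filter (fun d => f d = q)).card = 2 := by
    intro q
    obtain ⟨a, rfl⟩ := hf q
    have : Finset.univ.filter (fun d => f d = f a) = {a, Q.rv a} := by
      ext b
      simp only [Finset.mem_filter, Finset.mem_univ, true_and, Finset.mem_insert,
        Finset.mem_singleton]
      constructor
      · intro h; exact Q.edge_inj (congrArg Subtype.val h)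
      · rintro (h | h) <;> subst h
        · rfl
        · exact Subtype.ext (Q.edge_rv a)
    rw [this, Finset.card_pair]
    intro h
    exact Q.noloop a (congrArg Q.src h)
  have := Finset.card_eq_sum_card_fiberwise (s := (Finset.univ : Finset D))
    (t := (Finset.univ : Finset Q.R.G.edgeSet)) (f := f) (by intro x _; simp)
  rw [← Finset.card_univ (α := D), this, Finset.sum_congr rfl (fun q _ => hfib q)]
  simp [mul_comm]

lemma isPlane [Finite D] (hc : Q.G.Connected) (hcard : Nat.card D + 8 = 4 * Nat.card V) :
    Q.R.IsPlane := by
  have h1 := Q.card_faces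
  have h2 := Q.card_edges
  have h3 : Nat.card Q.R.G.ConnectedComponent = 1 := by
    have : Q.R.G.Connected := hc
    have := this.preconnected.subsingleton_connectedComponent
    have := this
    have hn : Nonempty Q.R.G.ConnectedComponent := ⟨Q.R.G.connectedComponentMk hc.nonempty.some⟩
    exact Nat.card_unique
  have h4 : Nat.card {v : V | ∀ w, ¬ Q.R.G.Adj v w} = 0 := by
    have : IsEmpty {v : V | ∀ w, ¬ Q.R.G.Adj v w} := by
      refine ⟨?_⟩
      rintro ⟨v, hv⟩
      obtain ⟨d, rfl⟩ := Q.surj v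
      exact hv _ (Q.adj d)
    exact Nat.card_of_isEmpty
  unfold WBW.RotationSystem.IsPlane
  rw [h3, h4]
  omega

lemma power_adj_of_adj (d : D) : (Q.R.power 2).Adj (Q.src d) (Q.src (Q.rv d)) :=
  Or.inl (Q.adj d)

lemma power_adj (d : D) (hne : Q.src (Q.rv d) ≠ Q.src (Q.rv (Q.nx d))) :
    (Q.R.power 2).Adj (Q.src (Q.rv d)) (Q.src (Q.rv (Q.nx d))) := by
  refine Or.inr ⟨hne, Or.inl ?_⟩
  have hinc : ∀ d', Q.src d' = Q.src d → Q.edge d' ∈ WBW.incidentSet Q.R.G (Q.src d) := by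
    intro d' h'
    exact ⟨(Q.mem_edgeSet _).2 ⟨d', rfl⟩, h' ▸ Sym2.mem_mk_left _ _⟩
  apply sInf_le
  refine ⟨[Q.edge d, Q.edge (Q.nx d)], ⟨⟨by simp, ?_, ?_, ?_⟩, ?_, ?_⟩, by simp⟩
  · simp only [List.nodup_cons, List.mem_singleton, List.not_mem_nil, not_false_eq_true,
      List.nodup_nil, and_true]
    intro h
    rcases Q.edge_inj h with h | h
    · exact Q.nofix d h.symm
    · have := congrArg Q.src h
      rw [← Q.src_nx] at this
      exact Q.noloop _ this
  · intro e he
    simp only [List.mem_cons, List.not_mem_nil, or_false] at he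
    rcases he with rfl | rfl
    · exact (hinc d rfl).1
    · exact (hinc _ (Q.src_nx d)).1
  · refine List.isChain_pair.2 ⟨Q.src d, hinc d rfl, hinc _ (Q.src_nx d), Or.inl (Q.rt_edge d)⟩
  · exact ⟨_, rfl, Sym2.mem_mk_right _ _⟩
  · exact ⟨_, rfl, Sym2.mem_mk_right _ _⟩

end QMap
end QFlat
namespace QFlat

/-- Columns of the cylinder. -/
abbrev Col (n : ℕ) := ZMod (n + 2) × ZMod (n + 2)

section
variable {n τ : ℕ}

instance : Fact (1 < n + 2) := ⟨by omega⟩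

/-- Successor column. -/
def sc (a : Col n) : Col n := (if a.2 = -1 then a.1 + 1 else a.1, a.2 + 1)

/-- Predecessor column. -/
def pd (a : Col n) : Col n := (if a.2 = 0 then a.1 - 1 else a.1, a.2 - 1)

lemma sc_pd (a : Col n) : sc (pd a) = a := by
  obtain ⟨i, j⟩ := a
  simp only [sc, pd]
  by_cases h : j = 0
  · simp [h]
  · have : j - 1 ≠ -1 := fun h' => h (by linear_combination h')
    simp [h, this]

lemma pd_sc (a : Col n) : pd (sc a) = a := by
  obtain ⟨i, j⟩ := a
  simp only [sc, pd]
  by_cases h : j = -1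
  · simp [h]
  · have : j + 1 ≠ 0 := fun h' => h (by linear_combination h')
    simp [h, this]

lemma sc_inj {a b : Col n} : sc a = sc b ↔ a = b :=
  ⟨fun h => by rw [← pd_sc a, h, pd_sc], fun h => by rw [h]⟩

lemma pd_inj {a b : Col n} : pd a = pd b ↔ a = b :=
  ⟨fun h => by rw [← sc_pd a, h, sc_pd], fun h => by rw [h]⟩

lemma sc_ne (a : Col n) : sc a ≠ a := by
  intro h
  have := congrArg Prod.snd h
  simp [sc] at this

lemma pd_ne (a : Col n) : pd a ≠ a := by
  intro h
  exact sc_ne a (by conv_lhs => rw [← h, sc_pd])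

lemma zmod_ind (P : ZMod (n + 2) → Prop) (h0 : P 0) (h : ∀ i, P i → P (i + 1)) (i) : P i := by
  have : ∀ k : ℕ, P (k : ZMod (n + 2)) := by
    intro k
    induction k with
    | zero => simpa using h0
    | succ k ih => simpa using h _ ih
  simpa using this i.val

lemma col_ind (P : Col n → Prop) (h0 : P (0, 0)) (h : ∀ a, P a → P (sc a)) (a) : P a := by
  obtain ⟨i, j⟩ := a
  have h1 : ∀ i, P (i, 0) → ∀ j, P (i, j) := by
    intro i hi
    refine zmod_ind _ hi ?_
    intro j hj
    by_cases hj' : j = -1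
    · subst hj'; simpa using hi
    · simpa [sc, hj'] using h _ hj
  have h2 : ∀ i, P (i, 0) := by
    refine zmod_ind _ h0 ?_
    intro i hi
    simpa [sc] using h _ (h1 i hi (-1))
  exact h1 i (h2 i) j

variable (n τ) in
/-- Vertices: two poles, a ring of hubs, and `τ + 2` rings of columns. -/
inductive Vx
  | N : Vx
  | S : Vx
  | hub : ZMod (n + 2) → Vx
  | lev : Fin (τ + 2) → Col n → Vx

variable (n τ) in
/-- Edges. -/
inductive Ed
  | nh : ZMod (n + 2) → Ed
  | hl : Col n → Ed
  | hb : ZMod (n + 2) → Ed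
  | l0 : Fin (τ + 1) → Col n → Ed
  | l1 : Fin (τ + 1) → Col n → Ed
  | ls : Col n → Ed

/-- Upper and lower ends of an edge. -/
def src : Ed n τ × Bool → Vx n τ
  | (.nh _, true) => .N
  | (.nh i, false) => .hub i
  | (.hl a, true) => .hub a.1
  | (.hl a, false) => .lev 0 a
  | (.hb i, true) => .hub i
  | (.hb i, false) => .lev 0 (i + 1, 0)
  | (.l0 t a, true) => .lev ⟨t.1, by omega⟩ a
  | (.l0 t a, false) => .lev ⟨t.1 + 1, by omega⟩ a
  | (.l1 t a, true) => .lev ⟨t.1, by omega⟩ a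
  | (.l1 t a, false) => .lev ⟨t.1 + 1, by omega⟩ (sc a)
  | (.ls a, true) => .lev ⟨τ + 1, by omega⟩ a
  | (.ls _, false) => .S

/-- Reversal of darts. -/
def rv (d : Ed n τ × Bool) : Ed n τ × Bool := (d.1, !d.2)

/-- Rotation. -/
def nx : Ed n τ × Bool → Ed n τ × Bool
  | (.nh i, true) => (.nh (i + 1), true)
  | (.nh i, false) => (.hl (i, 0), true)
  | (.hl a, true) => if a.2 = -1 then (.hb a.1, true) else (.hl (a.1, a.2 + 1), true)
  | (.hl a, false) => if a.2 = 0 then (.hb (a.1 - 1), false) else (.l0 0 a, true)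
  | (.hb i, true) => (.nh i, false)
  | (.hb i, false) => (.l0 0 (i + 1, 0), true)
  | (.l0 t a, true) => (.l1 t a, true)
  | (.l0 t a, false) => (.l1 t (pd a), false)
  | (.l1 ⟨0, _⟩ a, true) => (.hl a, false)
  | (.l1 ⟨t + 1, h⟩ a, true) => (.l0 ⟨t, by omega⟩ a, false)
  | (.l1 t a, false) =>
    if h : t.1 + 1 < τ + 1 then (.l0 ⟨t.1 + 1, h⟩ (sc a), true) else (.ls (sc a), true)
  | (.ls a, true) => (.l0 ⟨τ, by omega⟩ a, false)
  | (.ls a, false) => (.ls (pd a), false)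

lemma rv_rv (d : Ed n τ × Bool) : rv (rv d) = d := by simp [rv]

lemma src_nx (d : Ed n τ × Bool) : src (nx d) = src d := by
  rcases d with ⟨_ | ⟨i, j⟩ | _ | ⟨t, a⟩ | ⟨⟨_ | t, ht⟩, a⟩ | _, _ | _⟩ <;>
    simp only [nx] <;> (try split_ifs) <;> simp_all [src, sc_pd]
  omega

lemma quad (d : Ed n τ × Bool) : nx (rv (nx (rv (nx (rv (nx (rv d))))))) = d := by
  obtain ⟨f, hf⟩ : ∃ f : Ed n τ × Bool → Ed n τ × Bool, ∀ d, f d = nx (rv d) := ⟨_, fun _ => rfl⟩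
  simp only [← hf]
  have nhD : ∀ i, f (.nh i, true) = (.hl (i, 0), true) := fun i => by rw [hf]; rfl
  have nhU : ∀ i, f (.nh i, false) = (.nh (i + 1), true) := fun i => by rw [hf]; rfl
  have hlD0 : ∀ i, f (.hl (i, 0), true) = (.hb (i - 1), false) := fun i => by
    rw [hf]; simp [rv, nx]
  have hlD : ∀ i j, j ≠ 0 → f (.hl (i, j), true) = (.l0 0 (i, j), true) := fun i j h => by
    rw [hf]; simp [rv, nx, h]
  have hlU0 : ∀ i, f (.hl (i, -1), false) = (.hb i, true) := fun i => by
    rw [hf]; simp [rv, nx]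
  have hlU : ∀ i j, j ≠ -1 → f (.hl (i, j), false) = (.hl (i, j + 1), true) := fun i j h => by
    rw [hf]; simp [rv, nx, h]
  have hbD : ∀ i, f (.hb i, true) = (.l0 0 (i + 1, 0), true) := fun i => by rw [hf]; rfl
  have hbU : ∀ i, f (.hb i, false) = (.nh i, false) := fun i => by rw [hf]; rfl
  have l0D : ∀ t a, f (.l0 t a, true) = (.l1 t (pd a), false) := fun t a => by rw [hf]; rfl
  have l0U : ∀ t a, f (.l0 t a, false) = (.l1 t a, true) := fun t a => by rw [hf]; rfl
  have l1U0 : ∀ a, f (.l1 0 a, false) = (.hl a, false) := fun a => by rw [hf]; rfl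
  have l1U : ∀ t h a, f (.l1 ⟨t + 1, h⟩ a, false) = (.l0 ⟨t, by omega⟩ a, false) :=
    fun t h a => by rw [hf]; rfl
  have l1D : ∀ t h h' a, f (.l1 ⟨t, h⟩ a, true) = (.l0 ⟨t + 1, h'⟩ (sc a), true) :=
    fun t h h' a => by rw [hf]; simp only [rv, nx, Bool.not_true]; exact dif_pos h'
  have l1Dl : ∀ h a, f (.l1 ⟨τ, h⟩ a, true) = (.ls (sc a), true) :=
    fun h a => by rw [hf]; simp [rv, nx]
  have lsD : ∀ a, f (.ls a, true) = (.ls (pd a), false) := fun a => by rw [hf]; rfl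
  have lsU : ∀ a, f (.ls a, false) = (.l0 ⟨τ, by omega⟩ a, false) := fun a => by rw [hf]; rfl
  have cyc : ∀ d, f (f (f (f d))) = d → f (f (f (f (f d)))) = f d := fun d h => by rw [h]
  have F1 : ∀ i, f (f (f (f (.nh i, true)))) = (.nh i, true) := fun i => by
    rw [nhD, hlD0, hbU, nhU, sub_add_cancel]
  have F2 : ∀ i j, f (f (f (f (.hl (i, j + 1), true)))) = (.hl (i, j + 1), true) ∨ j = -1 := by
    intro i j
    by_cases h : j = -1
    · exact Or.inr h
    · left
      have h' : j + 1 ≠ 0 := fun h' => h (by linear_combination h')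
      rw [hlD _ _ h', l0D, ← Fin.mk_zero, Fin.mk_zero, l1U0]
      simp only [pd, h', if_false, add_sub_cancel_right]
      rw [hlU _ _ h]
  have F3 : ∀ i, f (f (f (f (.hb i, true)))) = (.hb i, true) := fun i => by
    rw [hbD, l0D, l1U0]
    simp only [pd, if_true, add_sub_cancel_right, zero_sub]
    rw [hlU0]
  have F4 : ∀ t h a, f (f (f (f (.l0 ⟨t + 1, h⟩ a, true)))) = (.l0 ⟨t + 1, h⟩ a, true) :=
    fun t h a => by rw [l0D, l1U, l0U, l1D, sc_pd]
  have F5 : ∀ a, f (f (f (f (.ls a, true)))) = (.ls a, true) := fun a => by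
    rw [lsD, lsU, l0U, l1Dl, sc_pd]
  have H0 : ∀ i, f (f (f (f (.hl (i, 0), true)))) = (.hl (i, 0), true) := fun i => by
    have := cyc _ (F1 i); rwa [nhD] at this
  have HD : ∀ i j, f (f (f (f (.hl (i, j), true)))) = (.hl (i, j), true) := fun i j => by
    by_cases h : j = 0
    · rw [h]; exact H0 i
    · have := F2 i (j - 1)
      rw [sub_add_cancel] at this
      exact this.resolve_right (fun h' => h (by linear_combination h'))
  have HBU : ∀ i, f (f (f (f (.hb i, false)))) = (.hb i, false) := fun i => by
    have := cyc _ (HD (i + 1) 0)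
    rwa [hlD0, add_sub_cancel_right] at this
  have L0 : ∀ t a, f (f (f (f (.l0 t a, true)))) = (.l0 t a, true) := by
    rintro ⟨_ | t, h⟩ ⟨i, j⟩
    · by_cases h : j = 0
      · have := cyc _ (F3 (i - 1))
        rw [hbD, sub_add_cancel] at this
        rw [h]; exact this
      · have := cyc _ (HD i j)
        rwa [hlD _ _ h] at this
    · exact F4 _ _ _
  have L1 : ∀ t a, f (f (f (f (.l1 t a, false)))) = (.l1 t a, false) := fun t a => by
    have := cyc _ (L0 t (sc a))
    rwa [l0D, pd_sc] at this
  have LSU : ∀ a, f (f (f (f (.ls a, false)))) = (.ls a, false) := fun a => by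
    have := cyc _ (F5 (sc a))
    rwa [lsD, pd_sc] at this
  have L0U : ∀ t a, f (f (f (f (.l0 t a, false)))) = (.l0 t a, false) := by
    rintro ⟨t, h⟩ a
    by_cases h' : t + 1 < τ + 1
    · have := cyc _ (L1 ⟨t + 1, h'⟩ a)
      rwa [l1U] at this
    · obtain rfl : t = τ := by omega
      have := cyc _ (LSU a)
      rwa [lsU] at this
  rcases d with ⟨i | ⟨i, j⟩ | i | ⟨t, a⟩ | ⟨t, a⟩ | a, _ | _⟩
  · have := cyc _ (HBU i); rwa [hbU] at this
  · exact F1 i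
  · have := cyc _ (L1 0 (i, j)); rwa [l1U0] at this
  · exact HD i j
  · exact HBU i
  · exact F3 i
  · exact L0U t a
  · exact L0 t a
  · exact L1 t a
  · have := cyc _ (L0U t a); rwa [l0U] at this
  · exact LSU a
  · exact F5 a

lemma noloop (d : Ed n τ × Bool) : src d ≠ src (rv d) := by
  rcases d with ⟨_ | ⟨i, j⟩ | _ | ⟨t, a⟩ | ⟨⟨t, ht⟩, a⟩ | _, _ | _⟩ <;>
    simp [src, rv]

lemma nofix (d : Ed n τ × Bool) : nx d ≠ d := by
  rcases d with ⟨_ | ⟨i, j⟩ | _ | ⟨t, a⟩ | ⟨⟨_ | t, ht⟩, a⟩ | _, _ | _⟩ <;>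
    simp only [nx] <;> (try split_ifs) <;> simp [pd_ne]

lemma inj (d d' : Ed n τ × Bool) (h1 : src d = src d') (h2 : src (rv d) = src (rv d')) :
    d = d' := by
  have hne : ∀ i : ZMod (n + 2), i + 1 ≠ i := fun i => by simp
  rcases d with ⟨_ | ⟨i, j⟩ | _ | ⟨t, a⟩ | ⟨⟨t, ht⟩, a⟩ | _, _ | _⟩ <;>
  rcases d' with ⟨_ | ⟨i', j'⟩ | _ | ⟨t', a'⟩ | ⟨⟨t', ht'⟩, a'⟩ | _, _ | _⟩ <;>
  simp [src, rv] at h1 h2 ⊢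
  all_goals grind [sc_ne, sc_inj]

lemma orbit (P : Ed n τ × Bool → Prop) (h : ∀ d, P (nx d) ↔ P d) (d d')
    (hs : src d = src d') (hd : P d) : P d' := by
  let b : Vx n τ → Ed n τ × Bool := fun v => match v with
    | .N => (.nh 0, true)
    | .S => (.ls (0, 0), false)
    | .hub i => (.nh i, false)
    | .lev t a => if h : t.1 < τ + 1 then (.l0 ⟨t.1, h⟩ a, true) else (.ls a, true)
  have hN : ∀ i, P (.nh i, true) ↔ P (.nh 0, true) := by
    refine zmod_ind _ Iff.rfl ?_
    intro i hi
    rw [← hi]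
    exact h (.nh i, true)
  have hS : ∀ a, P (.ls a, false) ↔ P (.ls (0, 0), false) := by
    refine col_ind _ Iff.rfl ?_
    intro a ha
    rw [← ha]
    have := h (.ls (sc a), false)
    simp only [nx, pd_sc] at this
    exact this.symm
  have hH : ∀ i j, P (.hl (i, j), true) ↔ P (.nh i, false) := by
    intro i
    have h0 : P (.hl (i, 0), true) ↔ P (.nh i, false) := h (.nh i, false)
    refine zmod_ind _ h0 ?_
    intro j hj
    by_cases hj' : j = -1
    · subst hj'; simpa using h0
    · have := h (.hl (i, j), true)
      simp only [nx, hj', if_false] at this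
      rw [← hj]
      exact this
  have hB : ∀ i, P (.hb i, true) ↔ P (.nh i, false) := fun i => (h (.hb i, true)).symm
  have hb0 : ∀ i, P (.hb i, false) ↔ P (.l0 0 (i + 1, 0), true) :=
    fun i => (h (.hb i, false)).symm
  have hl : ∀ a, P (.hl a, false) ↔ P (.l0 0 a, true) := by
    rintro ⟨i, j⟩
    rw [← h (.hl (i, j), false)]
    simp only [nx]
    split_ifs with hj
    · subst hj
      rw [hb0, sub_add_cancel]
    · rfl
  have h1f : ∀ t a, P (.l1 t a, false) ↔ P (b (src (.l1 t a, false))) := by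
    intro t a
    rw [← h (.l1 t a, false)]
    simp [nx, b, src]
  have h0f : ∀ t a, P (.l0 t a, false) ↔ P (b (src (.l0 t a, false))) := by
    intro t a
    rw [← h (.l0 t a, false)]
    simp only [nx]
    rw [h1f]
    simp [src, sc_pd]
  have key : ∀ d, P d ↔ P (b (src d)) := by
    rintro ⟨i | ⟨i, j⟩ | i | ⟨⟨t, ht⟩, a⟩ | ⟨⟨_ | t, ht⟩, a⟩ | a, _ | _⟩
    · rfl
    · exact hN i
    · rw [hl]; simp [b, src]
    · exact hH i j
    · rw [hb0]; simp [b, src]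
    · exact hB i
    · exact h0f _ _
    · simp [b, src, Nat.lt_succ_iff.1 ht]
    · exact h1f _ _
    · rw [← h]; simp only [nx]; rw [hl]; simp [b, src]
    · exact h1f _ _
    · rw [← h (.l1 _ a, true)]; simp only [nx]; rw [h0f]; simp [src]
    · exact hS a
    · simp [b, src]
  rw [key] at hd ⊢
  rwa [← hs]

lemma surj (v : Vx n τ) : ∃ d, src d = v := by
  rcases v with _ | _ | i | ⟨⟨t, ht⟩, a⟩
  · exact ⟨(.nh 0, true), rfl⟩
  · exact ⟨(.ls (0, 0), false), rfl⟩
  · exact ⟨(.nh i, false), rfl⟩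
  · by_cases h : t < τ + 1
    · exact ⟨(.l0 ⟨t, h⟩ a, true), rfl⟩
    · obtain rfl : t = τ + 1 := by omega
      exact ⟨(.ls a, true), rfl⟩

variable (n τ) in
/-- The concrete quadrangulation. -/
def Q : QMap (Vx n τ) (Ed n τ × Bool) :=
  ⟨src, nx, rv, rv_rv, src_nx, quad, inj, noloop, orbit, nofix, surj⟩

end
end QFlat
namespace QFlat
section
variable {n τ : ℕ}

/-- Vertices as a sum type. -/
def eqV : Vx n τ ≃ (Bool ⊕ ZMod (n + 2)) ⊕ (Fin (τ + 2) × Col n) where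
  toFun
    | .N => .inl (.inl true)
    | .S => .inl (.inl false)
    | .hub i => .inl (.inr i)
    | .lev t a => .inr (t, a)
  invFun
    | .inl (.inl true) => .N
    | .inl (.inl false) => .S
    | .inl (.inr i) => .hub i
    | .inr (t, a) => .lev t a
  left_inv := by rintro (_ | _ | _ | _) <;> rfl
  right_inv := by rintro (((_ | _) | _) | ⟨_, _⟩) <;> rfl

/-- Edges as a sum type. -/
def eqE : Ed n τ ≃ ((ZMod (n + 2) ⊕ ZMod (n + 2)) ⊕ (Col n ⊕ Col n)) ⊕
    ((Fin (τ + 1) × Col n) ⊕ (Fin (τ + 1) × Col n)) where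
  toFun
    | .nh i => .inl (.inl (.inl i))
    | .hb i => .inl (.inl (.inr i))
    | .hl i => .inl (.inr (.inl i))
    | .ls i => .inl (.inr (.inr i))
    | .l0 t a => .inr (.inl (t, a))
    | .l1 t a => .inr (.inr (t, a))
  invFun
    | .inl (.inl (.inl i)) => .nh i
    | .inl (.inl (.inr i)) => .hb i
    | .inl (.inr (.inl i)) => .hl i
    | .inl (.inr (.inr i)) => .ls i
    | .inr (.inl (t, a)) => .l0 t a
    | .inr (.inr (t, a)) => .l1 t a
  left_inv := by rintro (_ | _ | _ | _ | _ | _) <;> rfl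
  right_inv := by rintro (((_ | _) | (_ | _)) | (⟨_, _⟩ | ⟨_, _⟩)) <;> rfl

instance : Finite (Vx n τ) := Finite.of_equiv _ eqV.symm
instance : Finite (Ed n τ) := Finite.of_equiv _ eqE.symm

lemma card_eq : Nat.card (Ed n τ × Bool) + 8 = 4 * Nat.card (Vx n τ) := by
  rw [Nat.card_prod, Nat.card_congr eqV, Nat.card_congr eqE]
  simp only [Nat.card_sum, Nat.card_prod, Nat.card_zmod, Nat.card_eq_fintype_card (α := Fin _),
    Fintype.card_fin, Nat.card_eq_fintype_card (α := Bool), Fintype.card_bool]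
  ring

lemma conn : (Q n τ).G.Connected := by
  have hlev : ∀ k : ℕ, ∀ t : Fin (τ + 2), t.1 + k = τ + 1 → ∀ a,
      (Q n τ).G.Reachable (.lev t a) .S := by
    intro k
    induction k with
    | zero =>
      rintro ⟨t, ht⟩ h a
      obtain rfl : t = τ + 1 := by simpa using h
      exact ((Q n τ).adj (.ls a, true)).reachable
    | succ k ih =>
      rintro ⟨t, ht⟩ h a
      simp only at h
      have h1 := ((Q n τ).adj (.l0 ⟨t, by omega⟩ a, true)).reachable
      exact h1.trans (ih ⟨t + 1, by omega⟩ (by simp only; omega) a)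
  have hhub : ∀ i, (Q n τ).G.Reachable (.hub i) .S := fun i =>
    (((Q n τ).adj (.hl (i, 0), true)).reachable).trans (hlev (τ + 1) 0 (by simp) _)
  have hall : ∀ v, (Q n τ).G.Reachable v .S := by
    rintro (_ | _ | i | ⟨t, a⟩)
    · exact (((Q n τ).adj (.nh 0, true)).reachable).trans (hhub 0)
    · rfl
    · exact hhub i
    · exact hlev (τ + 1 - t.1) t (by omega) a
  have : Nonempty (Vx n τ) := ⟨.S⟩
  exact ⟨fun u v => (hall u).trans (hall v).symm⟩

lemma plane : (Q n τ).R.IsPlane := (Q n τ).isPlane conn card_eq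

variable (n τ) in
/-- The square of the quadrangulation. -/
noncomputable def GG : SimpleGraph (Vx n τ) := (Q n τ).R.power 2

lemma adj_hub (a : Col n) : (GG n τ).Adj (.hub a.1) (.lev 0 a) :=
  (Q n τ).power_adj_of_adj (.hl a, true)

lemma adj_down (t : ℕ) (h : t + 1 < τ + 2) (a : Col n) :
    (GG n τ).Adj (.lev ⟨t, by omega⟩ a) (.lev ⟨t + 1, h⟩ a) :=
  (Q n τ).power_adj_of_adj (.l0 ⟨t, by omega⟩ a, true)

lemma adj_ring (t : ℕ) (h : t + 1 < τ + 2) (a : Col n) :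
    (GG n τ).Adj (.lev ⟨t + 1, h⟩ a) (.lev ⟨t + 1, h⟩ (sc a)) := by
  refine (Q n τ).power_adj (.l0 ⟨t, by omega⟩ a, true) ?_
  intro h
  have h : (Vx.lev _ a : Vx n τ) = Vx.lev _ (sc a) := h
  rw [Vx.lev.injEq] at h
  exact sc_ne a h.2.symm

lemma adj_skip (t : ℕ) (h : t + 2 < τ + 2) (a : Col n) :
    (GG n τ).Adj (.lev ⟨t, by omega⟩ a) (.lev ⟨t + 2, h⟩ (sc a)) := by
  refine ((Q n τ).power_adj (.l1 ⟨t + 1, by omega⟩ a, true) ?_).symm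
  intro h
  have h : (Vx.lev ⟨t + 2, _⟩ (sc a) : Vx n τ) = Vx.lev ⟨t, _⟩ a := h
  rw [Vx.lev.injEq] at h
  exact sc_ne a h.2

/-- The region reserved for the pair of hubs `i, j`, using the ring `2 * β + 1`. -/
def reg (i j : ZMod (n + 2)) (β : ℕ) : Set (Vx n τ) := fun v => match v with
  | .N => False
  | .S => False
  | .hub k => k = i ∨ k = j
  | .lev t a => t.1 = 2 * β + 1 ∨
      ∃ b ≤ β, t.1 = 2 * b ∧ (a = sc^[b] (i, j) ∨ a = sc^[b] (j, i))

lemma reg_comm (i j : ZMod (n + 2)) (β : ℕ) :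
    (reg i j β : Set (Vx n τ)) = reg j i β := by
  ext (_ | _ | k | ⟨t, a⟩)
  · exact Iff.rfl
  · exact Iff.rfl
  · exact or_comm
  · exact or_congr Iff.rfl (exists_congr fun b => and_congr Iff.rfl (and_congr Iff.rfl or_comm))

/-- Reachability inside a set. -/
def RIn (S : Set (Vx n τ)) (u v : Vx n τ) : Prop :=
  ∃ p : (GG n τ).Walk u v, ∀ w ∈ p.support, w ∈ S

lemma RIn.trans {S : Set (Vx n τ)} {u v w} (h : RIn S u v) (h' : RIn S v w) : RIn S u w := by
  obtain ⟨p, hp⟩ := h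
  obtain ⟨q, hq⟩ := h'
  refine ⟨p.append q, fun x hx => ?_⟩
  rw [SimpleGraph.Walk.mem_support_append_iff] at hx
  exact hx.elim (hp x) (hq x)

lemma RIn.symm {S : Set (Vx n τ)} {u v} (h : RIn S u v) : RIn S v u := by
  obtain ⟨p, hp⟩ := h
  refine ⟨p.reverse, fun x hx => hp x ?_⟩
  simpa using hx

lemma RIn.step {S : Set (Vx n τ)} {u v} (h : (GG n τ).Adj u v) (hu : u ∈ S) (hv : v ∈ S) :
    RIn S u v := by
  refine ⟨.cons h .nil, fun x hx => ?_⟩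
  simp only [SimpleGraph.Walk.support_cons, SimpleGraph.Walk.support_nil, List.mem_cons,
    List.not_mem_nil, or_false] at hx
  rcases hx with rfl | rfl <;> assumption

lemma half (i j : ZMod (n + 2)) (β : ℕ) (hβ : 2 * β + 1 < τ + 2) :
    RIn (reg i j β) (.hub i) (.lev ⟨2 * β + 1, hβ⟩ (0, 0) : Vx n τ) := by
  have mem : ∀ b (hb : b ≤ β), (.lev ⟨2 * b, by omega⟩ (sc^[b] (i, j)) : Vx n τ) ∈ reg i j β :=
    fun b hb => Or.inr ⟨b, hb, rfl, Or.inl rfl⟩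
  have memr : ∀ a, (.lev ⟨2 * β + 1, hβ⟩ a : Vx n τ) ∈ reg i j β := fun a => Or.inl rfl
  have hv : ∀ b (hb : b ≤ β),
      RIn (reg i j β) (.hub i) (.lev ⟨2 * b, by omega⟩ (sc^[b] (i, j)) : Vx n τ) := by
    intro b
    induction b with
    | zero =>
      intro hb
      exact RIn.step (adj_hub (i, j)) (Or.inl rfl) (mem 0 hb)
    | succ b ih =>
      intro hb
      refine (ih (by omega)).trans (RIn.step ?_ (mem b (by omega)) (mem (b + 1) hb))
      rw [Function.iterate_succ_apply']
      exact adj_skip (2 * b) (by omega) _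
  have hr : ∀ a, RIn (reg i j β) (.lev ⟨2 * β + 1, hβ⟩ a) (.lev ⟨2 * β + 1, hβ⟩ (0, 0)) := by
    refine col_ind _ ?_ ?_
    · exact ⟨.nil, fun w hw => by
        simp only [SimpleGraph.Walk.support_nil, List.mem_singleton] at hw
        rw [hw]; exact memr _⟩
    · intro a ha
      exact (RIn.step (adj_ring _ _ a).symm (memr _) (memr _)).trans ha
  exact ((hv β le_rfl).trans (RIn.step (adj_down _ hβ _) (mem β le_rfl) (memr _))).trans (hr _)

lemma sc_iter_inj (b : ℕ) {x y : Col n} (h : sc^[b] x = sc^[b] y) : x = y :=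
  Function.Injective.iterate (fun _ _ => sc_inj.1) b h

lemma full (i j : ZMod (n + 2)) (β : ℕ) (hβ : 2 * β + 1 < τ + 2) :
    ∃ p : (GG n τ).Walk (.hub i) (.hub j), p.IsPath ∧ ∀ w ∈ p.support, w ∈ reg i j β := by
  classical
  have h2 := half (τ := τ) j i β hβ
  rw [reg_comm] at h2
  obtain ⟨p, hp⟩ := (half i j β hβ).trans h2.symm
  exact ⟨p.bypass, p.bypass_isPath, fun w hw => hp w (p.support_bypass_subset_support hw)⟩

end
end QFlat

/-- for every positive integer `n` there is a 2-flat graph containing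
the complete graph `K_n` as a topological minor. -/
theorem exists_twoFlat_with_clique_topMinor (n : ℕ) (hn : 0 < n) :
    ∃ (W : Type) (_ : Finite W) (G : SimpleGraph W),
      WBW.IsFlat 2 G ∧ WBW.IsTopMinor (⊤ : SimpleGraph (Fin n)) G := by
  classical
  let code : Sym2 (ZMod (n + 2)) ≃ Fin (Fintype.card (Sym2 (ZMod (n + 2)))) :=
    Fintype.equivFin _
  let τ := 2 * Fintype.card (Sym2 (ZMod (n + 2)))
  have hc : ∀ e, 2 * (code e).1 + 1 < τ + 2 := fun e => by
    have := (code e).2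
    omega
  refine ⟨QFlat.Vx n τ, inferInstance, QFlat.GG n τ,
    ⟨QFlat.Vx n τ, inferInstance, (QFlat.Q n τ).R, id, QFlat.plane,
      Function.injective_id, fun x y h => h⟩, ?_⟩
  let z : Fin n → ZMod (n + 2) := fun i => ((i.1 : ℕ) : ZMod (n + 2))
  have hz : Function.Injective z := by
    intro i j h
    have h := congrArg ZMod.val h
    simp only [z] at h
    rw [ZMod.val_natCast_of_lt (by omega), ZMod.val_natCast_of_lt (by omega)] at h
    exact Fin.ext h
  choose p hp hs using fun i j => QFlat.full (τ := τ) i j (code s(i, j)).1 (hc _)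
  refine ⟨fun i => .hub (z i), fun i j h => hz (by simpa using h),
    fun x y _ => p (z x) (z y), fun x y _ => hp _ _, ?_, ?_⟩
  · rintro x y _ v hv ⟨k, rfl⟩
    have := hs _ _ _ hv
    rcases this with h | h
    · left; simp [h]
    · right; simp [h]
  · intro x y x' y' _ _ hne v hv hv'
    have h1 := hs _ _ _ hv
    have h2 := hs _ _ _ hv'
    have hne' : s(z x, z y) ≠ s(z x', z y') := by
      intro h
      apply hne
      have := Sym2.map.injective hz (a₁ := s(x, y)) (a₂ := s(x', y')) (by simpa using h)
      exact this
    have hcode : (code s(z x, z y)).1 ≠ (code s(z x', z y')).1 := by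
      intro h
      exact hne' (code.injective (Fin.ext h))
    rcases v with _ | _ | k | ⟨t, a⟩
    · exact h1.elim
    · exact h1.elim
    · rcases h1 with h | h
      · exact ⟨x, by simp [h]⟩
      · exact ⟨y, by simp [h]⟩
    · exfalso
      rcases h1 with h1 | ⟨b, hb, h1, ha⟩ <;> rcases h2 with h2 | ⟨b', hb', h2, ha'⟩
      · omega
      · omega
      · omega
      · obtain rfl : b = b' := by omega
        apply hne'
        rcases ha with ha | ha <;> rcases ha' with ha' | ha' <;>
          have := QFlat.sc_iter_inj b (ha.symm.trans ha') <;>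
          rw [Prod.mk.injEq] at this <;> rw [Sym2.eq_iff]
        · exact Or.inl this
        · exact Or.inr this
        · exact Or.inr ⟨this.2, this.1⟩
        · exact Or.inl ⟨this.2, this.1⟩
end
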